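/- Assume L·1_n = 0, ξᵀL = 0, ξᵀ1_n = 1, 0 < p < 2, τ ≠ 0, and that every eigenvalue of the matrix N·A (over ℂ) other than 0 has modulus strictly less than 1 (equivalently, the spectral radius of N·A is < 1). Let z_k = (x_k, s_k, y_k) = A^k·z₀. Then the network synchronizes: for every index i, (x_k)_i − (x* + k·τ·r*) → 0, (s_k)_i → r*/r_i, and (y_k)_i → 0 as k → ∞, where r* = γ·Σ_i ξ_i·((s₀)_i − (κ₂/p)·(y₀)_i) and x* = γ·Σ_i ξ_i·((x₀)_i/r_i + τ·(κ₂/p²)·(y₀)_i). -/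

import Mathlib

open Matrix

/-- The 3n×3n block matrix A = [[I, τR, 0], [−κ₁L, I, −κ₂I], [−pL, 0, (1−p)I]]. -/
def Amat (n : ℕ) (L R : Matrix (Fin n) (Fin n) ℝ) (τ κ₁ κ₂ p : ℝ) :
    Matrix (Fin 3 × Fin n) (Fin 3 × Fin n) ℝ :=
  Matrix.of fun a b =>
    ![![(1 : Matrix (Fin n) (Fin n) ℝ), τ • R, 0],
      ![(-κ₁) • L, 1, (-κ₂) • (1 : Matrix (Fin n) (Fin n) ℝ)],
      ![(-p) • L, 0, (1 - p) • (1 : Matrix (Fin n) (Fin n) ℝ)]] a.1 b.1 a.2 b.2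

/-- The 3n×3n block-diagonal projection N = blockdiag(N₁, N₂, N₂) with
N₁ = I − γ·1_n ξᵀR⁻¹ and N₂ = I − γ·R⁻¹1_n ξᵀ. -/
noncomputable def Nmat (n : ℕ) (R : Matrix (Fin n) (Fin n) ℝ) (ξ : Fin n → ℝ) (γ : ℝ) :
    Matrix (Fin 3 × Fin n) (Fin 3 × Fin n) ℝ :=
  Matrix.of fun a b =>
    ![![(1 : Matrix (Fin n) (Fin n) ℝ)
          - γ • vecMulVec (fun _ => 1) (ξ ᵥ* R⁻¹), 0, 0],
      ![0, (1 : Matrix (Fin n) (Fin n) ℝ)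
          - γ • vecMulVec (R⁻¹ *ᵥ fun _ => 1) ξ, 0],
      ![0, 0, (1 : Matrix (Fin n) (Fin n) ℝ)
          - γ • vecMulVec (R⁻¹ *ᵥ fun _ => 1) ξ]] a.1 b.1 a.2 b.2

/-! Let `E` embed `ℝ³` as the synchronized states and let `F` take the weighted averages of the
three blocks of a state. Then `A E = E B` and `F A = B F` for an explicit `3 × 3` matrix `B`,
while `F E = 1` and `N = 1 - E F`. Hence `N` is an idempotent commuting with `A`, so
`A ^ k - E B ^ k F = A ^ k N = (N A) ^ k N`, which tends to `0` because the spectral radius of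
`N A` is less than `1`. The limiting behaviour is therefore that of `E B ^ k F`, and the powers of
`B` are computed in closed form. -/

open Filter Topology

section PowerLimits

theorem tendsto_pow_nhds_zero_of_spectralRadius_lt_one {B : Type*} [NormedRing B]
    [NormedAlgebra ℂ B] [CompleteSpace B] {a : B} (h : spectralRadius ℂ a < 1) :
    Tendsto (fun k : ℕ => a ^ k) atTop (𝓝 0) := by
  obtain ⟨r, har, hr⟩ := ENNReal.lt_iff_exists_nnreal_btwn.mp h
  have hgelfand :=
    (spectrum.pow_nnnorm_pow_one_div_tendsto_nhds_spectralRadius a).eventually_lt_const har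
  have hbound : ∀ᶠ k : ℕ in atTop, ‖a ^ k‖ ≤ (r : ℝ) ^ k := by
    filter_upwards [hgelfand, eventually_gt_atTop 0] with k hk hk0
    rw [one_div, ENNReal.rpow_inv_lt_iff (by exact_mod_cast hk0), ENNReal.rpow_natCast] at hk
    exact_mod_cast hk.le
  exact squeeze_zero_norm' hbound
    (tendsto_pow_atTop_nhds_zero_of_lt_one r.coe_nonneg (by exact_mod_cast hr))

variable {ι : Type*} [Fintype ι] [DecidableEq ι] {M : Matrix ι ι ℝ}

attribute [local instance] Matrix.linftyOpNormedRing Matrix.linftyOpNormedAlgebra in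
theorem tendsto_matrix_pow_nhds_zero_of_spectrum
    (h : ∀ μ ∈ spectrum ℂ (M.map ((↑) : ℝ → ℂ)), ‖μ‖ < 1) :
    Tendsto (fun k : ℕ => M ^ k) atTop (𝓝 0) := by
  cases isEmpty_or_nonempty ι
  · exact tendsto_const_nhds.congr fun _ => Subsingleton.elim _ _
  have hradius : spectralRadius ℂ (M.map ((↑) : ℝ → ℂ)) < 1 :=
    spectrum.spectralRadius_lt_of_forall_lt _ fun μ hμ => by exact_mod_cast h μ hμ
  have hre : Continuous fun Q : Matrix ι ι ℂ => Q.map Complex.re :=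
    continuous_id.matrix_map Complex.continuous_re
  refine ((hre.tendsto' 0 0 (by ext; simp)).comp
    (tendsto_pow_nhds_zero_of_spectralRadius_lt_one hradius)).congr fun k => ?_
  have hpow : M.map ((↑) : ℝ → ℂ) ^ k = (M ^ k).map ((↑) : ℝ → ℂ) :=
    (Matrix.map_pow M Complex.ofRealHom k).symm
  ext i j
  simp [hpow]

theorem eq_zero_of_mulVec_eq_self {v : ι → ℝ} (hM : Tendsto (fun k : ℕ => M ^ k) atTop (𝓝 0))
    (hv : M *ᵥ v = v) : v = 0 := by
  have hfix (k : ℕ) : M ^ k *ᵥ v = v := by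
    induction k with
    | zero => simp
    | succ k ih => rw [pow_succ, ← mulVec_mulVec, hv, ih]
  have hlim : Tendsto (fun k : ℕ => M ^ k *ᵥ v) atTop (𝓝 (0 *ᵥ v)) :=
    ((continuous_id.matrix_mulVec continuous_const).tendsto 0).comp hM
  simpa [hfix] using hlim

end PowerLimits

section DiagonalInverse

variable {ι K : Type*} [Fintype ι] [DecidableEq ι] [Field K] {R : Matrix ι ι K}

theorem isUnit_det_of_isDiag (hR : R.IsDiag) (hR0 : ∀ i, R i i ≠ 0) : IsUnit R.det := by
  rw [← hR.diagonal_diag, det_diagonal]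
  exact (Finset.prod_ne_zero_iff.mpr fun i _ => hR0 i).isUnit

theorem inv_mulVec_of_isDiag (hR : R.IsDiag) (hR0 : ∀ i, R i i ≠ 0) (v : ι → K) :
    R⁻¹ *ᵥ v = fun i => v i / R i i := by
  have hsolve : R *ᵥ (fun i => v i / R i i) = v := by
    conv_lhs => rw [← hR.diagonal_diag]
    ext i
    simp [mulVec_diagonal, mul_div_cancel₀, hR0 i]
  conv_lhs => rw [← hsolve]
  rw [mulVec_mulVec, nonsing_inv_mul R (isUnit_det_of_isDiag hR hR0), one_mulVec]

end DiagonalInverse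

section Intertwining

variable {m n S : Type*} [Fintype m] [Fintype n] [DecidableEq n] [Ring S]
  {A : Matrix n n S} {B : Matrix m m S} {E : Matrix n m S} {F : Matrix m n S}

theorem commute_one_sub_mul (hE : A * E = E * B) (hF : F * A = B * F) :
    Commute (1 - E * F) A := by
  refine (Commute.one_left A).sub_left ?_
  rw [commute_iff_eq, Matrix.mul_assoc, hF, ← Matrix.mul_assoc, ← hE, Matrix.mul_assoc]

variable [DecidableEq m]

theorem pow_mul_eq_mul_pow_of_mul_eq (hE : A * E = E * B) (k : ℕ) : A ^ k * E = E * B ^ k := by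
  induction k with
  | zero => simp
  | succ k ih => rw [pow_succ, Matrix.mul_assoc, hE, ← Matrix.mul_assoc, ih, Matrix.mul_assoc,
      ← pow_succ]

theorem isIdempotentElem_one_sub_mul (hFE : F * E = 1) : IsIdempotentElem (1 - E * F) := by
  refine IsIdempotentElem.one_sub ?_
  rw [IsIdempotentElem, Matrix.mul_assoc, ← Matrix.mul_assoc F, hFE, Matrix.one_mul]

theorem pow_sub_eq_pow_mul (hE : A * E = E * B) (hF : F * A = B * F) (hFE : F * E = 1) (k : ℕ) :
    A ^ k - E * B ^ k * F = ((1 - E * F) * A) ^ k * (1 - E * F) := by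
  have hcomm := commute_one_sub_mul hE hF
  have hidem := isIdempotentElem_one_sub_mul hFE
  calc A ^ k - E * B ^ k * F = A ^ k * (1 - E * F) := by
        rw [mul_sub, mul_one, ← Matrix.mul_assoc, pow_mul_eq_mul_pow_of_mul_eq hE]
    _ = A ^ k * (1 - E * F) ^ (k + 1) := by rw [hidem.pow_succ_eq]
    _ = ((1 - E * F) * A) ^ k * (1 - E * F) := by
        rw [hcomm.eq, hcomm.symm.mul_pow, pow_succ, mul_assoc]

theorem tendsto_pow_sub_nhds_zero [TopologicalSpace S] [IsTopologicalRing S]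
    (hE : A * E = E * B) (hF : F * A = B * F) (hFE : F * E = 1)
    (hlim : Tendsto (fun k : ℕ => ((1 - E * F) * A) ^ k) atTop (𝓝 0)) :
    Tendsto (fun k : ℕ => A ^ k - E * B ^ k * F) atTop (𝓝 0) := by
  simp_rw [pow_sub_eq_pow_mul hE hF hFE]
  simpa using hlim.mul_const (1 - E * F)

end Intertwining

section BlockDiagonalCol

variable {l m ι κ S : Type*} [DecidableEq m]

/-- The block-diagonal matrix whose `b`-th diagonal block is the column `u b`. Its transpose is
block-diagonal with rows as blocks. -/
def blockDiagonalCol [Zero S] (u : m → ι → S) : Matrix (m × ι) m S :=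
  of fun a b => if a.1 = b then u b a.2 else 0

variable [CommSemiring S]

section
variable [Fintype m]

theorem blockDiagonalCol_mul (u : m → ι → S) (B : Matrix m l S) :
    blockDiagonalCol u * B = of fun a b => u a.1 a.2 * B a.1 b := by
  ext a b
  simp [blockDiagonalCol, mul_apply]

theorem mul_blockDiagonalCol_transpose (B : Matrix l m S) (u : m → ι → S) :
    B * (blockDiagonalCol u)ᵀ = of fun a b => B a b.1 * u b.1 b.2 := by
  ext a b
  simp [blockDiagonalCol, mul_apply]

theorem blockDiagonalCol_mulVec (u : m → ι → S) (c : m → S) (a : m × ι) :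
    (blockDiagonalCol u *ᵥ c) a = u a.1 a.2 * c a.1 := by
  simp [blockDiagonalCol, mulVec, dotProduct]

theorem blockDiagonalCol_mul_transpose (u v : m → ι → S) :
    blockDiagonalCol u * (blockDiagonalCol v)ᵀ =
      comp m m ι ι S (diagonal fun a => vecMulVec (u a) (v a)) := by
  ext a b
  by_cases h : a.1 = b.1 <;>
    simp [blockDiagonalCol, mul_apply, vecMulVec_apply, h]

end

variable [Fintype m] [Fintype ι]

theorem blockDiagonalCol_transpose_mulVec (u : m → ι → S) (z : m × ι → S) (b : m) :
    ((blockDiagonalCol u)ᵀ *ᵥ z) b = u b ⬝ᵥ Function.curry z b := by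
  simp [blockDiagonalCol, mulVec, dotProduct, Fintype.sum_prod_type_right]

theorem blockDiagonalCol_transpose_mul_self (u v : m → ι → S) :
    (blockDiagonalCol u)ᵀ * blockDiagonalCol v = diagonal fun b => u b ⬝ᵥ v b := by
  ext a b
  rcases eq_or_ne a b with rfl | h
  · simp [blockDiagonalCol, mul_apply, dotProduct, Fintype.sum_prod_type_right]
  · simp [blockDiagonalCol, mul_apply, Fintype.sum_prod_type_right, h, h.symm]

theorem comp_mul_blockDiagonalCol (M : Matrix l m (Matrix κ ι S)) (u : m → ι → S) :
    comp l m κ ι S M * blockDiagonalCol u = of fun a b => (M a.1 b *ᵥ u b) a.2 := by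
  ext a b
  simp [blockDiagonalCol, mul_apply, mulVec, dotProduct, Fintype.sum_prod_type_right]

theorem blockDiagonalCol_transpose_mul_comp (u : m → ι → S) (M : Matrix m l (Matrix ι κ S)) :
    (blockDiagonalCol u)ᵀ * comp m l ι κ S M = of fun a b => (u a ᵥ* M a b.1) b.2 := by
  ext a b
  simp [blockDiagonalCol, mul_apply, vecMul, dotProduct, Fintype.sum_prod_type_right]

end BlockDiagonalCol

section ReducedDynamics

variable {K : Type*} [Field K]

/-- The matrix by which `Amat` acts on the averages of the blocks `x`, `s`, `y`. -/
def reducedMat (τ κ₂ p : K) : Matrix (Fin 3) (Fin 3) K :=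
  !![1, τ, 0; 0, 1, -κ₂; 0, 0, 1 - p]

theorem reducedMat_pow_mulVec {p : K} (hp : p ≠ 0) (τ κ₂ : K) (c : Fin 3 → K) (k : ℕ) :
    reducedMat τ κ₂ p ^ k *ᵥ c =
      ![c 0 + τ * (κ₂ / p ^ 2) * c 2 + k * τ * (c 1 - κ₂ / p * c 2)
          - τ * (κ₂ / p ^ 2) * ((1 - p) ^ k * c 2),
        c 1 - κ₂ / p * c 2 + κ₂ / p * ((1 - p) ^ k * c 2),
        (1 - p) ^ k * c 2] := by
  induction k with
  | zero => ext a; fin_cases a <;> simp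
  | succ k ih =>
    rw [pow_succ', ← mulVec_mulVec, ih]
    ext a
    fin_cases a <;>
      simp only [reducedMat, mulVec, dotProduct, Fin.sum_univ_three, of_apply, cons_val,
        Fin.zero_eta, Fin.mk_one, Fin.reduceFinMk, Nat.cast_add, Nat.cast_one] <;>
      field_simp <;> ring

end ReducedDynamics

section Synchronization

variable {n : ℕ} {L R : Matrix (Fin n) (Fin n) ℝ} {τ κ₁ κ₂ p γ : ℝ} {ξ : Fin n → ℝ}

/-- The embedding of `(x, s, y) ∈ ℝ³` as the synchronized state `(x 1, s R⁻¹1, y R⁻¹1)`. -/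
noncomputable def syncEmbedding (R : Matrix (Fin n) (Fin n) ℝ) :
    Matrix (Fin 3 × Fin n) (Fin 3) ℝ :=
  blockDiagonalCol ![1, R⁻¹ *ᵥ 1, R⁻¹ *ᵥ 1]

/-- The weighted averages `(γ ξᵀR⁻¹x, γ ξᵀs, γ ξᵀy)` of a state `(x, s, y)`. -/
noncomputable def blockAverage (R : Matrix (Fin n) (Fin n) ℝ) (ξ : Fin n → ℝ) (γ : ℝ) :
    Matrix (Fin 3) (Fin 3 × Fin n) ℝ :=
  (blockDiagonalCol ![γ • ξ ᵥ* R⁻¹, γ • ξ, γ • ξ])ᵀ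

theorem Nmat_eq_one_sub (R : Matrix (Fin n) (Fin n) ℝ) (ξ : Fin n → ℝ) (γ : ℝ) :
    Nmat n R ξ γ = 1 - syncEmbedding R * blockAverage R ξ γ := by
  have hblocks : !![1 - γ • vecMulVec 1 (ξ ᵥ* R⁻¹), 0, 0;
        0, 1 - γ • vecMulVec (R⁻¹ *ᵥ 1) ξ, 0;
        0, 0, 1 - γ • vecMulVec (R⁻¹ *ᵥ 1) ξ] =
      1 - diagonal fun a => vecMulVec ((![1, R⁻¹ *ᵥ 1, R⁻¹ *ᵥ 1] : Fin 3 → Fin n → ℝ) a)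
        ((![γ • ξ ᵥ* R⁻¹, γ • ξ, γ • ξ] : Fin 3 → Fin n → ℝ) a) := by
    refine Matrix.ext fun a b => ?_
    fin_cases a <;> fin_cases b <;> simp [vecMulVec_smul]
  rw [syncEmbedding, blockAverage, blockDiagonalCol_mul_transpose, ← comp_one]
  exact congrArg (comp (Fin 3) (Fin 3) (Fin n) (Fin n) ℝ) hblocks

theorem Amat_eq_comp (L R : Matrix (Fin n) (Fin n) ℝ) (τ κ₁ κ₂ p : ℝ) :
    Amat n L R τ κ₁ κ₂ p = comp (Fin 3) (Fin 3) (Fin n) (Fin n) ℝ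
      !![1, τ • R, 0; -κ₁ • L, 1, -κ₂ • 1; -p • L, 0, (1 - p) • 1] :=
  rfl

theorem Amat_mul_syncEmbedding (hR : IsUnit R.det) (hL1 : L *ᵥ 1 = 0) :
    Amat n L R τ κ₁ κ₂ p * syncEmbedding R = syncEmbedding R * reducedMat τ κ₂ p := by
  have hRinv : R *ᵥ R⁻¹ *ᵥ 1 = 1 := by rw [mulVec_mulVec, mul_nonsing_inv R hR, one_mulVec]
  rw [Amat_eq_comp, syncEmbedding, comp_mul_blockDiagonalCol, blockDiagonalCol_mul]
  ext ⟨a, i⟩ b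
  fin_cases a <;> fin_cases b <;>
    simp [-mulVec_mulVec, reducedMat, smul_mulVec, neg_mulVec, hRinv, hL1, mul_comm]

theorem blockAverage_mul_Amat (hR : IsUnit R.det) (hξL : ξ ᵥ* L = 0) :
    blockAverage R ξ γ * Amat n L R τ κ₁ κ₂ p = reducedMat τ κ₂ p * blockAverage R ξ γ := by
  have hRinv : ξ ᵥ* R⁻¹ ᵥ* R = ξ := by rw [vecMul_vecMul, nonsing_inv_mul R hR, vecMul_one]
  rw [Amat_eq_comp, blockAverage, blockDiagonalCol_transpose_mul_comp,
    mul_blockDiagonalCol_transpose]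
  ext a ⟨b, j⟩
  fin_cases a <;> fin_cases b <;>
    simp [-vecMul_vecMul, reducedMat, vecMul_smul, smul_vecMul, vecMul_neg, hRinv, hξL]

theorem blockAverage_mul_syncEmbedding (hγ : γ * (ξ ⬝ᵥ R⁻¹ *ᵥ 1) = 1) :
    blockAverage R ξ γ * syncEmbedding R = 1 := by
  rw [blockAverage, syncEmbedding, blockDiagonalCol_transpose_mul_self, ← diagonal_one]
  congr 1
  ext a
  fin_cases a <;> simp [hγ, ← dotProduct_mulVec]

theorem blockAverage_mulVec (R : Matrix (Fin n) (Fin n) ℝ) (ξ : Fin n → ℝ) (γ : ℝ)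
    (z : Fin 3 × Fin n → ℝ) :
    blockAverage R ξ γ *ᵥ z = ![γ * (ξ ⬝ᵥ R⁻¹ *ᵥ Function.curry z 0),
      γ * (ξ ⬝ᵥ Function.curry z 1), γ * (ξ ⬝ᵥ Function.curry z 2)] := by
  ext b
  rw [blockAverage, blockDiagonalCol_transpose_mulVec]
  fin_cases b <;> simp [dotProduct_mulVec]

-- If `γ = 0` then `N = 1`, and the synchronized state `(1, 0, 0)` is a nonzero fixed vector of
-- `NA`.
theorem ne_zero_of_tendsto_Nmat_mul_Amat_pow [NeZero n] (hL1 : L *ᵥ 1 = 0) (hR : IsUnit R.det)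
    (hlim : Tendsto (fun k : ℕ => (Nmat n R ξ γ * Amat n L R τ κ₁ κ₂ p) ^ k) atTop (𝓝 0)) :
    γ ≠ 0 := by
  rintro rfl
  have hF : blockAverage R ξ 0 = 0 := by
    ext a b
    fin_cases a <;> simp [blockAverage, blockDiagonalCol]
  have hN : Nmat n R ξ 0 = 1 := by rw [Nmat_eq_one_sub, hF, Matrix.mul_zero, sub_zero]
  have hfix : (Nmat n R ξ 0 * Amat n L R τ κ₁ κ₂ p) *ᵥ (syncEmbedding R *ᵥ ![1, 0, 0])
      = syncEmbedding R *ᵥ ![1, 0, 0] := by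
    rw [hN, one_mul, mulVec_mulVec, Amat_mul_syncEmbedding hR hL1, ← mulVec_mulVec]
    congr 1
    ext a
    fin_cases a <;> simp [reducedMat]
  have hzero := congrFun (eq_zero_of_mulVec_eq_self hlim hfix) (0, 0)
  simp [syncEmbedding, blockDiagonalCol_mulVec] at hzero

theorem tendsto_Amat_pow_sub_nhds_zero (hR : IsUnit R.det) (hξL : ξ ᵥ* L = 0)
    (hL1 : L *ᵥ 1 = 0) (hγ : γ * (ξ ⬝ᵥ R⁻¹ *ᵥ 1) = 1)
    (hlim : Tendsto (fun k : ℕ => (Nmat n R ξ γ * Amat n L R τ κ₁ κ₂ p) ^ k) atTop (𝓝 0))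
    (z₀ : Fin 3 × Fin n → ℝ) (a : Fin 3 × Fin n) :
    Tendsto (fun k : ℕ => (Amat n L R τ κ₁ κ₂ p ^ k *ᵥ z₀) a -
      (syncEmbedding R *ᵥ reducedMat τ κ₂ p ^ k *ᵥ blockAverage R ξ γ *ᵥ z₀) a) atTop (𝓝 0) := by
  rw [Nmat_eq_one_sub] at hlim
  have hpow := tendsto_pow_sub_nhds_zero (Amat_mul_syncEmbedding hR hL1)
    (blockAverage_mul_Amat hR hξL) (blockAverage_mul_syncEmbedding hγ) hlim
  have heval : Continuous fun Q : Matrix (Fin 3 × Fin n) (Fin 3 × Fin n) ℝ => (Q *ᵥ z₀) a := by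
    fun_prop
  simpa [Function.comp_def, sub_mulVec, mulVec_mulVec, Matrix.mul_assoc] using
    (heval.tendsto 0).comp hpow

theorem stmt11_general (hR : IsUnit R.det) (hp0 : 0 < p) (hp2 : p < 2) (hξL : ξ ᵥ* L = 0)
    (hL1 : L *ᵥ 1 = 0) (hγ : γ⁻¹ = ξ ⬝ᵥ R⁻¹ *ᵥ 1)
    (hspec : ∀ μ ∈ spectrum ℂ ((Nmat n R ξ γ * Amat n L R τ κ₁ κ₂ p).map ((↑) : ℝ → ℂ)),
      μ ≠ 0 → ‖μ‖ < 1)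
    (z₀ : Fin 3 × Fin n → ℝ) (i : Fin n) :
    Tendsto (fun k : ℕ => (Amat n L R τ κ₁ κ₂ p ^ k *ᵥ z₀) (0, i)
        - (γ * (ξ ⬝ᵥ (R⁻¹ *ᵥ Function.curry z₀ 0 + (τ * (κ₂ / p ^ 2)) • Function.curry z₀ 2))
          + k * τ * (γ * (ξ ⬝ᵥ (Function.curry z₀ 1 - (κ₂ / p) • Function.curry z₀ 2)))))
      atTop (𝓝 0)
    ∧ Tendsto (fun k : ℕ => (Amat n L R τ κ₁ κ₂ p ^ k *ᵥ z₀) (1, i)) atTop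
      (𝓝 (γ * (ξ ⬝ᵥ (Function.curry z₀ 1 - (κ₂ / p) • Function.curry z₀ 2)) * (R⁻¹ *ᵥ 1) i))
    ∧ Tendsto (fun k : ℕ => (Amat n L R τ κ₁ κ₂ p ^ k *ᵥ z₀) (2, i)) atTop (𝓝 0) := by
  have hlim := tendsto_matrix_pow_nhds_zero_of_spectrum fun μ hμ => by
    rcases eq_or_ne μ 0 with rfl | h0
    exacts [by simp, hspec μ hμ h0]
  have : NeZero n := NeZero.of_pos i.pos
  have hγ1 : γ * (ξ ⬝ᵥ R⁻¹ *ᵥ 1) = 1 := by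
    rw [← hγ, mul_inv_cancel₀ (ne_zero_of_tendsto_Nmat_mul_Amat_pow hL1 hR hlim)]
  have herr := tendsto_Amat_pow_sub_nhds_zero hR hξL hL1 hγ1 hlim z₀
  simp only [blockAverage_mulVec, reducedMat_pow_mulVec hp0.ne', syncEmbedding,
    blockDiagonalCol_mulVec] at herr
  have hgeom : Tendsto (fun k : ℕ => (1 - p) ^ k * (γ * (ξ ⬝ᵥ Function.curry z₀ 2))) atTop
      (𝓝 0) := by
    have hp : |1 - p| < 1 := abs_lt.mpr ⟨by linarith, by linarith⟩
    simpa using (tendsto_pow_atTop_nhds_zero_of_abs_lt_one hp).mul_const _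
  simp only [dotProduct_add, dotProduct_sub, dotProduct_smul, smul_eq_mul]
  refine ⟨?_, ?_, ?_⟩
  · have h := (herr (0, i)).sub (hgeom.const_mul (τ * (κ₂ / p ^ 2)))
    rw [mul_zero, sub_zero] at h
    exact h.congr fun k => by simp only [cons_val, Pi.one_apply]; ring
  · have h := (herr (1, i)).add ((hgeom.const_mul (κ₂ / p)).const_add
      (γ * (ξ ⬝ᵥ Function.curry z₀ 1 - κ₂ / p * (ξ ⬝ᵥ Function.curry z₀ 2)))
      |>.mul_const ((R⁻¹ *ᵥ 1) i))
    rw [mul_zero, add_zero, zero_add] at h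
    exact h.congr fun k => by simp only [cons_val]; ring
  · have h := (herr (2, i)).add (hgeom.mul_const ((R⁻¹ *ᵥ 1) i))
    rw [zero_mul, zero_add] at h
    exact h.congr fun k => by simp only [cons_val]; ring

end Synchronization

theorem stmt11 (n : ℕ) (hn : 1 ≤ n) (L R : Matrix (Fin n) (Fin n) ℝ)
    (hRdiag : ∀ i j, i ≠ j → R i j = 0) (hRpos : ∀ i, 0 < R i i)
    (τ κ₁ κ₂ p : ℝ) (hτ : τ ≠ 0) (hp0 : 0 < p) (hp2 : p < 2)
    (ξ : Fin n → ℝ) (hξL : ξ ᵥ* L = 0) (hξ1 : (∑ i, ξ i) = 1)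
    (hL1 : L *ᵥ (fun _ => (1 : ℝ)) = 0)
    (γ : ℝ) (hγ : γ⁻¹ = ∑ i, ξ i / R i i)
    (hspec : ∀ μ ∈ spectrum ℂ
        (((Nmat n R ξ γ) * (Amat n L R τ κ₁ κ₂ p)).map ((↑) : ℝ → ℂ)),
        μ ≠ 0 → ‖μ‖ < 1)
    (z0 : Fin 3 × Fin n → ℝ) (z : ℕ → (Fin 3 × Fin n → ℝ))
    (hz : ∀ k, z k = ((Amat n L R τ κ₁ κ₂ p) ^ k) *ᵥ z0) :
    ∀ i : Fin n,
      Filter.Tendsto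
        (fun k : ℕ => z k (0, i)
          - ((γ * ∑ j, ξ j * (z0 (0, j) / R j j + τ * (κ₂ / p ^ 2) * z0 (2, j)))
            + (k : ℝ) * τ * (γ * ∑ j, ξ j * (z0 (1, j) - (κ₂ / p) * z0 (2, j)))))
        Filter.atTop (nhds 0)
      ∧ Filter.Tendsto (fun k : ℕ => z k (1, i)) Filter.atTop
          (nhds ((γ * ∑ j, ξ j * (z0 (1, j) - (κ₂ / p) * z0 (2, j))) / R i i))
      ∧ Filter.Tendsto (fun k : ℕ => z k (2, i)) Filter.atTop (nhds 0) := by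
  intro i
  have hR0 (i : Fin n) : R i i ≠ 0 := (hRpos i).ne'
  have h := stmt11_general (κ₁ := κ₁) (isUnit_det_of_isDiag hRdiag hR0) hp0 hp2 hξL hL1
    (by simpa [inv_mulVec_of_isDiag hRdiag hR0, dotProduct, div_eq_mul_inv] using hγ) hspec z0 i
  simpa [hz, inv_mulVec_of_isDiag hRdiag hR0, dotProduct, div_eq_mul_inv] using h
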